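/- Multivariate Pólya extension of the Dini theorem: Let m ≥ 1 and for each n ∈ ℕ let f_n : [0,1]^m → ℝ be nondecreasing in each coordinate (that is, f_n(x) ≤ f_n(y) whenever x ≤ y componentwise). Assume that f_n(x) → f(x) as n → ∞ for every x ∈ [0,1]^m, where f is continuous on [0,1]^m. Then sup_{x ∈ [0,1]^m} |f_n(x) − f(x)| → 0 as n → ∞. -/

import Mathlib

/-!
Near a point `x₀` of the domain pick `a` and `b`, close to `x₀`, such that `a ≤ x ≤ b` for all `x`
near `x₀`. Monotonicity gives `f n a ≤ f n x ≤ f n b`, so convergence at the two points `a` and `b`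
together with continuity of the limit `g` at `x₀` forces `f n x → g x₀` as `n → ∞` and `x → x₀`
jointly. This joint convergence at every point is locally uniform convergence, hence uniform
convergence on a compact domain.
-/

open Filter Topology

section OrderBounds

theorem frequently_pi {ι : Type*} {X : ι → Type*} {F : ∀ i, Filter (X i)} {p : ∀ i, X i → Prop}
    (h : ∀ i, ∃ᶠ a in F i, p i a) : ∃ᶠ a in Filter.pi F, ∀ i, p i (a i) := by
  simp only [frequently_iff_neBot] at h
  simpa only [frequently_iff_neBot, Set.pi, Set.mem_univ, true_imp_iff, Set.mem_ofPred_eq]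
    using pi_inf_principal_univ_pi_neBot.2 h

theorem frequently_eventually_le_nhdsWithin {X : Type*} [LinearOrder X] [TopologicalSpace X]
    [ClosedIicTopology X] {s : Set X} {x : X} (hx : x ∈ s) :
    ∃ᶠ a in 𝓝[s] x, ∀ᶠ y in 𝓝[s] x, a ≤ y := by
  by_cases hlt : ∃ᶠ a in 𝓝[s] x, a < x
  · exact hlt.mono fun a ha => eventually_nhdsWithin_of_eventually_nhds (eventually_ge_nhds ha)
  · have hmin : ∀ᶠ y in 𝓝[s] x, x ≤ y := by
      simpa only [not_frequently, not_lt] using hlt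
    intro hnot
    exact hnot.self_of_nhdsWithin hx hmin

theorem frequently_eventually_ge_nhdsWithin {X : Type*} [LinearOrder X] [TopologicalSpace X]
    [ClosedIciTopology X] {s : Set X} {x : X} (hx : x ∈ s) :
    ∃ᶠ b in 𝓝[s] x, ∀ᶠ y in 𝓝[s] x, y ≤ b :=
  frequently_eventually_le_nhdsWithin (X := Xᵒᵈ) hx

variable {ι : Type*} [Finite ι] {X : ι → Type*} [∀ i, LinearOrder (X i)]
  [∀ i, TopologicalSpace (X i)] {s : ∀ i, Set (X i)} {x : ∀ i, X i}

theorem frequently_eventually_le_nhdsWithin_pi [∀ i, ClosedIicTopology (X i)]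
    (hx : x ∈ Set.univ.pi s) :
    ∃ᶠ a in 𝓝[Set.univ.pi s] x, ∀ᶠ y in 𝓝[Set.univ.pi s] x, a ≤ y := by
  rw [nhdsWithin_pi_univ_eq]
  exact (frequently_pi fun i => frequently_eventually_le_nhdsWithin (hx i trivial)).mono
    fun _ => eventually_pi

theorem frequently_eventually_ge_nhdsWithin_pi [∀ i, ClosedIciTopology (X i)]
    (hx : x ∈ Set.univ.pi s) :
    ∃ᶠ b in 𝓝[Set.univ.pi s] x, ∀ᶠ y in 𝓝[Set.univ.pi s] x, y ≤ b :=
  frequently_eventually_le_nhdsWithin_pi (X := fun i => (X i)ᵒᵈ) hx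

end OrderBounds

section MonotoneConvergence

variable {ι X β : Type*} [Preorder X] [TopologicalSpace X] [LinearOrder β]
  {l : Filter ι} {s : Set X} {f : ι → X → β} {g : X → β} {x₀ : X}

theorem eventually_lt_prod_nhdsWithin_of_monotoneOn [TopologicalSpace β] [ClosedIicTopology β]
    (hmono : ∀ n, MonotoneOn (f n) s)
    (hlim : ∀ x ∈ s, Tendsto (fun n => f n x) l (𝓝 (g x)))
    (hg : ContinuousWithinAt g s x₀) (hbelow : ∃ᶠ a in 𝓝[s] x₀, ∀ᶠ y in 𝓝[s] x₀, a ≤ y)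
    {c : β} (hc : c < g x₀) : ∀ᶠ p in l ×ˢ 𝓝[s] x₀, c < f p.1 p.2 := by
  obtain ⟨a, hle, hca, ha⟩ :=
    (hbelow.and_eventually ((hg.eventually_const_lt hc).and eventually_mem_nhdsWithin)).exists
  filter_upwards [((hlim a ha).eventually_const_lt hca).prod_mk
    (hle.and eventually_mem_nhdsWithin)] with ⟨n, x⟩ ⟨hcn, hax, hx⟩
  exact hcn.trans_le (hmono n ha hx hax)

theorem eventually_gt_prod_nhdsWithin_of_monotoneOn [TopologicalSpace β] [ClosedIciTopology β]
    (hmono : ∀ n, MonotoneOn (f n) s)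
    (hlim : ∀ x ∈ s, Tendsto (fun n => f n x) l (𝓝 (g x)))
    (hg : ContinuousWithinAt g s x₀) (habove : ∃ᶠ b in 𝓝[s] x₀, ∀ᶠ y in 𝓝[s] x₀, y ≤ b)
    {c : β} (hc : g x₀ < c) : ∀ᶠ p in l ×ˢ 𝓝[s] x₀, f p.1 p.2 < c :=
  eventually_lt_prod_nhdsWithin_of_monotoneOn (X := Xᵒᵈ) (β := βᵒᵈ)
    (fun n => (hmono n).dual) hlim hg habove hc

theorem tendsto_prod_nhdsWithin_of_monotoneOn [TopologicalSpace β] [OrderTopology β]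
    (hmono : ∀ n, MonotoneOn (f n) s)
    (hlim : ∀ x ∈ s, Tendsto (fun n => f n x) l (𝓝 (g x)))
    (hg : ContinuousWithinAt g s x₀)
    (hbelow : ∃ᶠ a in 𝓝[s] x₀, ∀ᶠ y in 𝓝[s] x₀, a ≤ y)
    (habove : ∃ᶠ b in 𝓝[s] x₀, ∀ᶠ y in 𝓝[s] x₀, y ≤ b) :
    Tendsto (fun p : ι × X => f p.1 p.2) (l ×ˢ 𝓝[s] x₀) (𝓝 (g x₀)) :=
  tendsto_order.2
    ⟨fun _ => eventually_lt_prod_nhdsWithin_of_monotoneOn hmono hlim hg hbelow,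
      fun _ => eventually_gt_prod_nhdsWithin_of_monotoneOn hmono hlim hg habove⟩

end MonotoneConvergence

section UniformConvergence

theorem tendstoLocallyUniformlyOn_of_tendsto_prod_nhdsWithin {ι X β : Type*} [TopologicalSpace X]
    [UniformSpace β] {l : Filter ι} {s : Set X} {f : ι → X → β} {g : X → β}
    (hg : ContinuousOn g s)
    (hf : ∀ x ∈ s, Tendsto (fun p : ι × X => f p.1 p.2) (l ×ˢ 𝓝[s] x) (𝓝 (g x))) :
    TendstoLocallyUniformlyOn f g l s :=
  tendstoLocallyUniformlyOn_iff_forall_tendsto.2 fun x hx =>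
    (((hg x hx).tendsto.comp tendsto_snd).prodMk_nhds (hf x hx)).mono_right
      (nhds_le_uniformity (g x))

theorem tendsto_biSup_dist_of_tendstoUniformlyOn {ι X β : Type*} [PseudoMetricSpace β]
    {l : Filter ι} {s : Set X} {f : ι → X → β} {g : X → β} (h : TendstoUniformlyOn f g l s) :
    Tendsto (fun n => ⨆ x ∈ s, dist (f n x) (g x)) l (𝓝 0) := by
  have hnonneg (n : ι) : 0 ≤ ⨆ x ∈ s, dist (f n x) (g x) :=
    Real.iSup_nonneg fun _ => Real.iSup_nonneg fun _ => dist_nonneg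
  have hsmall (ε : ℝ) (hε : 0 < ε) : ∀ᶠ n in l, ⨆ x ∈ s, dist (f n x) (g x) ≤ ε := by
    filter_upwards [Metric.tendstoUniformlyOn_iff.1 h ε hε] with n hn
    -- For `x ∉ s` the inner supremum is empty, with value `0`.
    refine Real.iSup_le (fun x => Real.iSup_le (fun hx => ?_) hε.le) hε.le
    exact (dist_comm (f n x) (g x)).trans_le (hn x hx).le
  refine tendsto_order.2 ⟨fun c hc => .of_forall fun n => hc.trans_le (hnonneg n), fun c hc => ?_⟩
  exact (hsmall (c / 2) (half_pos hc)).mono fun n hn => hn.trans_lt (half_lt_self hc)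

end UniformConvergence

theorem multivariate_polya_dini_general {κ ι β : Type*} [Finite ι] {X : ι → Type*}
    [∀ i, LinearOrder (X i)] [∀ i, TopologicalSpace (X i)] [∀ i, OrderClosedTopology (X i)]
    [LinearOrder β] [UniformSpace β] [OrderTopology β] {l : Filter κ} {s : ∀ i, Set (X i)}
    {f : κ → (∀ i, X i) → β} {g : (∀ i, X i) → β} (hs : ∀ i, IsCompact (s i))
    (hmono : ∀ n, MonotoneOn (f n) (Set.univ.pi s))
    (hlim : ∀ x ∈ Set.univ.pi s, Tendsto (fun n => f n x) l (𝓝 (g x)))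
    (hg : ContinuousOn g (Set.univ.pi s)) : TendstoUniformlyOn f g l (Set.univ.pi s) := by
  have hloc : TendstoLocallyUniformlyOn f g l (Set.univ.pi s) :=
    tendstoLocallyUniformlyOn_of_tendsto_prod_nhdsWithin hg fun x hx =>
      tendsto_prod_nhdsWithin_of_monotoneOn hmono hlim (hg x hx)
        (frequently_eventually_le_nhdsWithin_pi hx) (frequently_eventually_ge_nhdsWithin_pi hx)
  exact (tendstoLocallyUniformlyOn_iff_tendstoUniformlyOn_of_compact
    (isCompact_univ_pi hs)).1 hloc

/-- **Multivariate Pólya extension of the Dini theorem.** If `f_n : [0,1]^m → ℝ`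
are nondecreasing in each coordinate and converge pointwise on `[0,1]^m` to a
continuous function `f`, then the convergence is uniform:
`sup_{x ∈ [0,1]^m} |f_n(x) − f(x)| → 0`. -/
theorem multivariate_polya_dini
    (m : ℕ) (hm : 1 ≤ m)
    (f : ℕ → (Fin m → ℝ) → ℝ) (g : (Fin m → ℝ) → ℝ)
    -- each `f n` is nondecreasing in each coordinate on `[0,1]^m`
    (hmono : ∀ n, ∀ x ∈ Set.Icc (0 : Fin m → ℝ) 1, ∀ y ∈ Set.Icc (0 : Fin m → ℝ) 1,
      x ≤ y → f n x ≤ f n y)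
    -- pointwise convergence on `[0,1]^m`
    (hlim : ∀ x ∈ Set.Icc (0 : Fin m → ℝ) 1,
      Tendsto (fun n => f n x) atTop (𝓝 (g x)))
    -- the limit is continuous on `[0,1]^m`
    (hcont : ContinuousOn g (Set.Icc (0 : Fin m → ℝ) 1)) :
    Tendsto (fun n => ⨆ x ∈ Set.Icc (0 : Fin m → ℝ) 1, |f n x - g x|) atTop (𝓝 0) := by
  simp only [← Real.dist_eq, ← Set.pi_univ_Icc] at hmono hlim hcont ⊢
  exact tendsto_biSup_dist_of_tendstoUniformlyOn
    (multivariate_polya_dini_general (fun _ => isCompact_Icc) hmono hlim hcont)
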